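/- arXiv:math/0610642 — 3 statements merged into one kernel-verified Lean document; each statement's English description precedes it below -/
import Mathlib

section
/- Let k, ω, V, k₀ be real numbers with ω = k² + V, and let ψ(x,t) = exp(i(kx − ωt)). Then at every point (x,t) ∈ ℝ², −∂ₓ∂ₜψ + i(3k₀² − V)∂ₓψ + (k₀³ − 3k₀V)ψ + 3ik₀∂ₜψ = −(k − k₀)³·ψ(x,t). In particular, the plane wave satisfies Kuska's absorbing boundary condition ABC(1,1) identically if and only if k = k₀. -/
/-- The 1D plane wave `ψ(x,t) = exp(i(kx − ωt))`. -/
noncomputable def planeWave1D (k ω : ℝ) (x t : ℝ) : ℂ :=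
  Complex.exp (Complex.I * ((k * x - ω * t : ℝ) : ℂ))

/-!
On a plane wave `∂ₓ` acts as multiplication by `ik` and `∂ₜ` as multiplication by `-iω`, so the
boundary operator multiplies the wave by a real polynomial in `k` and `ω`. Written in terms of the
dispersion defect `ω - (k² + V)`, this polynomial is `(3k₀ - k)(ω - (k² + V)) - (k - k₀)³`. As the
wave never vanishes, the condition holds exactly when this polynomial is zero; on the dispersion
relation only the cube remains.
-/

theorem hasDerivAt_cexp_I_mul_ofReal {θ : ℝ → ℝ} {θ' s : ℝ} (hθ : HasDerivAt θ θ' s) :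
    HasDerivAt (fun u => Complex.exp (Complex.I * θ u))
      (Complex.I * θ' * Complex.exp (Complex.I * θ s)) s :=
  (hθ.ofReal_comp.const_mul Complex.I).cexp.congr_deriv (mul_comm _ _)

section PlaneWave

variable (k ω x t : ℝ)

theorem planeWave1D_ne_zero : planeWave1D k ω x t ≠ 0 :=
  Complex.exp_ne_zero _

theorem hasDerivAt_planeWave1D_space :
    HasDerivAt (fun x' => planeWave1D k ω x' t) (Complex.I * k * planeWave1D k ω x t) x :=
  hasDerivAt_cexp_I_mul_ofReal ((hasDerivAt_const_mul k).sub_const (ω * t))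

theorem hasDerivAt_planeWave1D_time :
    HasDerivAt (fun t' => planeWave1D k ω x t') (Complex.I * (-ω : ℝ) * planeWave1D k ω x t) t :=
  hasDerivAt_cexp_I_mul_ofReal ((hasDerivAt_const_mul ω).const_sub (k * x))

theorem deriv_space_deriv_time_planeWave1D :
    deriv (fun x' => deriv (fun t' => planeWave1D k ω x' t') t) x =
      k * ω * planeWave1D k ω x t := by
  simp only [(hasDerivAt_planeWave1D_time k ω _ t).deriv]
  rw [((hasDerivAt_planeWave1D_space k ω x t).const_mul _).deriv]
  push_cast
  linear_combination -(k * ω * planeWave1D k ω x t) * Complex.I_sq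

end PlaneWave

/-- The left-hand side of Kuska's absorbing boundary condition ABC(1,1) at the right boundary, for
the constant potential `V` and the wave-number parameter `k₀`, evaluated on `ψ` at `(x, t)`. The
mixed derivative is taken first in time, then in space. -/
noncomputable def kuskaABC (V k₀ : ℝ) (ψ : ℝ → ℝ → ℂ) (x t : ℝ) : ℂ :=
  -(deriv (fun x' => deriv (fun t' => ψ x' t') t) x)
    + Complex.I * ((3 * k₀ ^ 2 - V : ℝ) : ℂ) * deriv (fun x' => ψ x' t) x
    + ((k₀ ^ 3 - 3 * k₀ * V : ℝ) : ℂ) * ψ x t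
    + 3 * Complex.I * (k₀ : ℂ) * deriv (fun t' => ψ x t') t

/-- The Fourier symbol of Kuska's ABC(1,1): the real factor by which the boundary operator
multiplies the plane wave of wave number `k` and frequency `ω`. It is written in powers of the
dispersion defect `ω - (k ^ 2 + V)`. -/
def kuskaSymbol (V k₀ k ω : ℝ) : ℝ :=
  (3 * k₀ - k) * (ω - (k ^ 2 + V)) - (k - k₀) ^ 3

theorem kuskaSymbol_of_dispersion (V k₀ k : ℝ) :
    kuskaSymbol V k₀ k (k ^ 2 + V) = -(k - k₀) ^ 3 := by
  rw [kuskaSymbol]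
  ring

theorem kuskaABC_planeWave1D (k ω V k₀ x t : ℝ) :
    kuskaABC V k₀ (planeWave1D k ω) x t = kuskaSymbol V k₀ k ω * planeWave1D k ω x t := by
  rw [kuskaABC, deriv_space_deriv_time_planeWave1D, (hasDerivAt_planeWave1D_space k ω x t).deriv,
    (hasDerivAt_planeWave1D_time k ω x t).deriv, kuskaSymbol]
  push_cast
  linear_combination
    ((3 * k₀ ^ 2 - V) * k - 3 * k₀ * ω) * planeWave1D k ω x t * Complex.I_sq

theorem kuskaABC_planeWave1D_eq_zero_iff (k ω V k₀ x t : ℝ) :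
    kuskaABC V k₀ (planeWave1D k ω) x t = 0 ↔ kuskaSymbol V k₀ k ω = 0 := by
  rw [kuskaABC_planeWave1D, mul_eq_zero_iff_right (planeWave1D_ne_zero k ω x t),
    Complex.ofReal_eq_zero]

theorem kuska_abc_plane_wave_general (k ω V k₀ : ℝ) :
    (∀ x t : ℝ, kuskaABC V k₀ (planeWave1D k ω) x t =
      kuskaSymbol V k₀ k ω * planeWave1D k ω x t) ∧
    ((∀ x t : ℝ, kuskaABC V k₀ (planeWave1D k ω) x t = 0) ↔ kuskaSymbol V k₀ k ω = 0) :=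
  ⟨kuskaABC_planeWave1D k ω V k₀, by
    simp only [kuskaABC_planeWave1D_eq_zero_iff, forall_const]⟩

/-- for the plane wave with `ω = k² + V`, the left-hand side of Kuska's
ABC(1,1) equals `−(k − k₀)³·ψ`; in particular the plane wave satisfies ABC(1,1)
identically iff `k = k₀`. -/
theorem kuska_abc_plane_wave (k ω V k₀ : ℝ) (hω : ω = k ^ 2 + V) :
    (∀ x t : ℝ,
      -(deriv (fun x' : ℝ => deriv (fun t' : ℝ => planeWave1D k ω x' t') t) x)
        + Complex.I * ((3 * k₀ ^ 2 - V : ℝ) : ℂ) * deriv (fun x' : ℝ => planeWave1D k ω x' t) x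
        + ((k₀ ^ 3 - 3 * k₀ * V : ℝ) : ℂ) * planeWave1D k ω x t
        + 3 * Complex.I * (k₀ : ℂ) * deriv (fun t' : ℝ => planeWave1D k ω x t') t
      = -(((k - k₀ : ℝ) : ℂ)) ^ 3 * planeWave1D k ω x t) ∧
    ((∀ x t : ℝ,
      -(deriv (fun x' : ℝ => deriv (fun t' : ℝ => planeWave1D k ω x' t') t) x)
        + Complex.I * ((3 * k₀ ^ 2 - V : ℝ) : ℂ) * deriv (fun x' : ℝ => planeWave1D k ω x' t) x
        + ((k₀ ^ 3 - 3 * k₀ * V : ℝ) : ℂ) * planeWave1D k ω x t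
        + 3 * Complex.I * (k₀ : ℂ) * deriv (fun t' : ℝ => planeWave1D k ω x t') t
      = 0) ↔ k = k₀) := by
  simpa [hω, kuskaSymbol_of_dispersion, sub_eq_zero, kuskaABC]
    using kuska_abc_plane_wave_general k ω V k₀
end

section
/- Let V, k₀ be real constants and let ψ: ℝ² → ℂ be three times continuously differentiable, satisfying i∂ₜψ = −∂ₓₓψ + Vψ on an open neighborhood of a point (x₀,t₀). Then at (x₀,t₀), −∂ₓ∂ₜψ + i(3k₀² − V)∂ₓψ + (k₀³ − 3k₀V)ψ + 3ik₀∂ₜψ = −i∂ₓₓₓψ − 3k₀∂ₓₓψ + 3ik₀²∂ₓψ + k₀³ψ; that is, Kuska's ABC(1,1) combined with the equation is equivalent to (i∂ₓ + k₀)³ψ = 0, the Fevens–Jiang condition with p = 3 and group velocities C₁ = C₂ = C₃ = 2k₀. -/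
/-!
With `H = −∂ₓₓ + V`, a solution satisfies `∂ₜψ = −iHψ`. As `V` is constant, `H` commutes with `∂ₓ`,
so `∂ₓ∂ₜψ = −iH∂ₓψ` as well. Substituting both into Kuska's condition eliminates the time
derivative: the two occurrences of `V∂ₓψ` cancel, as do the two of `Vψ`.
-/

open Complex Filter Topology

section Schrodinger

variable {E : Type*} [NormedAddCommGroup E] [NormedSpace ℂ E] {V : ℂ}

/-- The Hamiltonian `H = −∂ₓₓ + V` of a constant potential `V`, acting on wave functions with
values in a complex normed space; the Schrödinger equation reads `∂ₜψ = −iHψ`. -/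
noncomputable def hamiltonian (V : ℂ) (u : ℝ → E) (x : ℝ) : E :=
  -deriv (deriv u) x + V • u x

theorem hasDerivAt_hamiltonian {u : ℝ → E} {x : ℝ} (hu : ContDiffAt ℝ 3 u x) :
    HasDerivAt (hamiltonian V u) (hamiltonian V (deriv u) x) x := by
  have hu' : ContDiffAt ℝ 2 (deriv u) x := hu.derivWithin (by norm_num)
  have hu'' : ContDiffAt ℝ 1 (deriv (deriv u)) x := hu'.derivWithin (by norm_num)
  exact (hu''.differentiableAt one_ne_zero).hasDerivAt.neg.add
    ((hu.differentiableAt three_ne_zero).hasDerivAt.const_smul V)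

theorem hasDerivAt_of_I_smul_deriv_eq {f : ℝ → E} {t : ℝ} {e : E} (hf : DifferentiableAt ℝ f t)
    (h : I • deriv f t = e) : HasDerivAt f (-I • e) t := by
  have hderiv : deriv f t = -I • e := by rw [← h, smul_smul, neg_mul, I_mul_I, neg_neg, one_smul]
  exact hderiv ▸ hf.hasDerivAt

theorem deriv_deriv_time_of_schrodinger {ψ : ℝ → ℝ → E} {x₀ t₀ : ℝ}
    (hψ : ContDiffAt ℝ 3 (fun x => ψ x t₀) x₀)
    (heq : ∀ᶠ x in 𝓝 x₀, HasDerivAt (ψ x) (-I • hamiltonian V (fun x' => ψ x' t₀) x) t₀) :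
    deriv (fun x => deriv (ψ x) t₀) x₀ = -I • hamiltonian V (deriv fun x => ψ x t₀) x₀ := by
  have htime : (fun x => deriv (ψ x) t₀) =ᶠ[𝓝 x₀]
      fun x => -I • hamiltonian V (fun x' => ψ x' t₀) x :=
    heq.mono fun _ hx => hx.deriv
  exact htime.deriv_eq.trans ((hasDerivAt_hamiltonian hψ).const_smul (-I)).deriv

theorem eventually_hasDerivAt_of_schrodinger {ψ : ℝ → ℝ → E} {x₀ t₀ : ℝ}
    (hψ : Differentiable ℝ fun p : ℝ × ℝ => ψ p.1 p.2)
    (heq : ∀ᶠ p : ℝ × ℝ in 𝓝 (x₀, t₀),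
      I • deriv (ψ p.1) p.2 = hamiltonian V (fun x => ψ x p.2) p.1) :
    ∀ᶠ x in 𝓝 x₀, HasDerivAt (ψ x) (-I • hamiltonian V (fun x' => ψ x' t₀) x) t₀ := by
  have hline := (Continuous.prodMk_left t₀).continuousAt.eventually heq
  filter_upwards [hline] with x hx
  exact hasDerivAt_of_I_smul_deriv_eq (hψ.comp (by fun_prop : Differentiable ℝ (Prod.mk x)) t₀) hx

/-- Without differentiability in time, an equation for `deriv (ψ x) t₀` could hold through the junk
value `0`; hence `HasDerivAt` in the hypothesis. -/
theorem kuska_equals_fevens_jiang_general (k₀ : ℂ) {ψ : ℝ → ℝ → E} {x₀ t₀ : ℝ}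
    (hψ : ContDiffAt ℝ 3 (fun x => ψ x t₀) x₀)
    (heq : ∀ᶠ x in 𝓝 x₀, HasDerivAt (ψ x) (-I • hamiltonian V (fun x' => ψ x' t₀) x) t₀) :
    -deriv (fun x => deriv (ψ x) t₀) x₀
      + (I * (3 * k₀ ^ 2 - V)) • deriv (fun x => ψ x t₀) x₀
      + (k₀ ^ 3 - 3 * k₀ * V) • ψ x₀ t₀
      + (3 * I * k₀) • deriv (ψ x₀) t₀
    = -I • deriv (deriv (deriv fun x => ψ x t₀)) x₀
      - (3 * k₀) • deriv (deriv fun x => ψ x t₀) x₀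
      + (3 * I * k₀ ^ 2) • deriv (fun x => ψ x t₀) x₀
      + k₀ ^ 3 • ψ x₀ t₀ := by
  have hI (e : E) : (3 * I * k₀) • -I • e = (3 * k₀) • e := by
    rw [smul_smul]
    congr 1
    linear_combination (-3 * k₀) * I_sq
  rw [deriv_deriv_time_of_schrodinger hψ heq, heq.self_of_nhds.deriv, hI, hamiltonian, hamiltonian]
  module

end Schrodinger

/-- if a C³ function `ψ` satisfies `i∂ₜψ = −∂ₓₓψ + Vψ` on a neighborhood of
`(x₀,t₀)`, then at that point the left-hand side of Kuska's ABC(1,1) equals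
`−i∂ₓₓₓψ − 3k₀∂ₓₓψ + 3ik₀²∂ₓψ + k₀³ψ`, i.e. Kuska's condition combined with the equation
is the Fevens–Jiang condition `(i∂ₓ + k₀)³ψ = 0` with `C₁ = C₂ = C₃ = 2k₀`. -/
theorem kuska_equals_fevens_jiang (V k₀ : ℝ) (ψ : ℝ → ℝ → ℂ)
    (hψ : ContDiff ℝ 3 (fun p : ℝ × ℝ => ψ p.1 p.2)) (x₀ t₀ : ℝ)
    (heq : ∀ᶠ p : ℝ × ℝ in nhds (x₀, t₀),
      Complex.I * deriv (fun t : ℝ => ψ p.1 t) p.2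
        = -(deriv (fun x : ℝ => deriv (fun x' : ℝ => ψ x' p.2) x) p.1) + (V : ℂ) * ψ p.1 p.2) :
    -(deriv (fun x : ℝ => deriv (fun t : ℝ => ψ x t) t₀) x₀)
      + Complex.I * ((3 * k₀ ^ 2 - V : ℝ) : ℂ) * deriv (fun x : ℝ => ψ x t₀) x₀
      + ((k₀ ^ 3 - 3 * k₀ * V : ℝ) : ℂ) * ψ x₀ t₀
      + 3 * Complex.I * (k₀ : ℂ) * deriv (fun t : ℝ => ψ x₀ t) t₀
    = -Complex.I *
        deriv (fun x : ℝ =>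
          deriv (fun x' : ℝ => deriv (fun x'' : ℝ => ψ x'' t₀) x') x) x₀
      - 3 * (k₀ : ℂ) * deriv (fun x : ℝ => deriv (fun x' : ℝ => ψ x' t₀) x) x₀
      + 3 * Complex.I * ((k₀ ^ 2 : ℝ) : ℂ) * deriv (fun x : ℝ => ψ x t₀) x₀
      + ((k₀ ^ 3 : ℝ) : ℂ) * ψ x₀ t₀ := by
  simpa using kuska_equals_fevens_jiang_general (k₀ : ℂ)
    (hψ.comp (contDiff_prodMk_left t₀)).contDiffAt
    (eventually_hasDerivAt_of_schrodinger (V := V) (hψ.differentiable three_ne_zero) heq)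
end

section
/- Let ξ, η, ξ₀, V be real numbers, set ω = ξ² + η² + V, and let ψ(x,y,t) = exp(i(ξx + ηy − ωt)). Then at every point (x,y,t) ∈ ℝ³, i∂ₓ∂ᵧᵧψ − ∂ₓ∂ₜψ + i(3ξ₀² − V)∂ₓψ + (ξ₀³ − 3ξ₀V)ψ + 3ξ₀∂ᵧᵧψ + 3iξ₀∂ₜψ = −(ξ − ξ₀)³·ψ(x,y,t). In particular, the east absorbing boundary condition annihilates exactly those plane waves with x-wave number ξ = ξ₀, for every transverse wave number η. -/
/-- The 2D plane wave `ψ(x,y,t) = exp(i(ξx + ηy − ωt))`. -/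
noncomputable def planeWave2D (ξ η ω : ℝ) (x y t : ℝ) : ℂ :=
  Complex.exp (Complex.I * ((ξ * x + η * y - ω * t : ℝ) : ℂ))

/-!
On a plane wave `∂ₓ`, `∂ᵧ`, `∂ₜ` act as multiplication by `iξ`, `iη`, `-iω`, so ABC(1,1) acts as
multiplication by its symbol, which depends on `η`, `ω` and `V` only through `s = ω - η² - V`.
The (1,1)-Padé approximation of `ξ = √s` centered at `s = ξ₀²` is
`ξ = ξ₀ (ξ₀² + 3s) / (3ξ₀² + s)`, and the symbol is its numerator minus `ξ` times its denominator.
On the dispersion relation `s = ξ²` this difference is the binomial expansion of `(ξ₀ - ξ)³`.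
-/

open Complex

/-- The operator of the east absorbing boundary condition ABC(1,1) centered at `ξ₀`, for the
potential `V`; the boundary condition for a wave function `ψ` is `eastABC ξ₀ V ψ = 0`. -/
noncomputable def eastABC (ξ₀ V : ℝ) (ψ : ℝ → ℝ → ℝ → ℂ) (x y t : ℝ) : ℂ :=
  I * deriv (fun x' : ℝ => deriv (fun y' : ℝ => deriv (fun y'' : ℝ => ψ x' y'' t) y') y) x
    - deriv (fun x' : ℝ => deriv (fun t' : ℝ => ψ x' y t') t) x
    + I * ((3 * ξ₀ ^ 2 - V : ℝ) : ℂ) * deriv (fun x' : ℝ => ψ x' y t) x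
    + ((ξ₀ ^ 3 - 3 * ξ₀ * V : ℝ) : ℂ) * ψ x y t
    + 3 * (ξ₀ : ℂ) * deriv (fun y' : ℝ => deriv (fun y'' : ℝ => ψ x y'' t) y') y
    + 3 * I * (ξ₀ : ℂ) * deriv (fun t' : ℝ => ψ x y t') t

/-- The symbol of `eastABC`, written in the variable `s = ω - η² - V`: the cross-multiplied
(1,1)-Padé approximation of `ξ = √s` centered at `s = ξ₀²`. -/
def eastABCSymbol {R : Type*} [CommRing R] (ξ₀ ξ s : R) : R :=
  ξ₀ * (ξ₀ ^ 2 + 3 * s) - ξ * (3 * ξ₀ ^ 2 + s)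

section Symbol

variable {R : Type*} [CommRing R]

theorem eastABCSymbol_sq (ξ₀ ξ : R) : eastABCSymbol ξ₀ ξ (ξ ^ 2) = -(ξ - ξ₀) ^ 3 := by
  rw [eastABCSymbol]
  ring

theorem eastABCSymbol_sq_eq_zero_iff [IsReduced R] {ξ₀ ξ : R} :
    eastABCSymbol ξ₀ ξ (ξ ^ 2) = 0 ↔ ξ = ξ₀ := by
  rw [eastABCSymbol_sq, neg_eq_zero, pow_eq_zero_iff three_ne_zero, sub_eq_zero]

end Symbol

theorem hasDerivAt_cexp_I_mul_ofReal_s10 {φ : ℝ → ℝ} {φ' s : ℝ} (hφ : HasDerivAt φ φ' s) :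
    HasDerivAt (fun s' : ℝ => exp (I * (φ s' : ℂ))) (I * φ' * exp (I * (φ s : ℂ))) s :=
  (hφ.ofReal_comp.const_mul I).cexp.congr_deriv (mul_comm _ _)

section PlaneWave

variable (ξ η ω x y t : ℝ)

theorem planeWave2D_ne_zero : planeWave2D ξ η ω x y t ≠ 0 :=
  exp_ne_zero _

theorem deriv_planeWave2D_x :
    deriv (fun x' : ℝ => planeWave2D ξ η ω x' y t) x = I * ξ * planeWave2D ξ η ω x y t := by
  have phase_deriv : HasDerivAt (fun x' : ℝ => ξ * x' + η * y - ω * t) ξ x :=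
    ((hasDerivAt_const_mul ξ).add_const (η * y)).sub_const (ω * t)
  exact (hasDerivAt_cexp_I_mul_ofReal_s10 phase_deriv).deriv

theorem deriv_planeWave2D_y :
    deriv (fun y' : ℝ => planeWave2D ξ η ω x y' t) y = I * η * planeWave2D ξ η ω x y t := by
  have phase_deriv : HasDerivAt (fun y' : ℝ => ξ * x + η * y' - ω * t) η y :=
    ((hasDerivAt_const_mul η).const_add (ξ * x)).sub_const (ω * t)
  exact (hasDerivAt_cexp_I_mul_ofReal_s10 phase_deriv).deriv

theorem deriv_planeWave2D_t :
    deriv (fun t' : ℝ => planeWave2D ξ η ω x y t') t = -(I * ω) * planeWave2D ξ η ω x y t := by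
  have phase_deriv : HasDerivAt (fun t' : ℝ => ξ * x + η * y - ω * t') (-ω) t :=
    (hasDerivAt_const_mul ω).const_sub (ξ * x + η * y)
  rw [← mul_neg, ← ofReal_neg]
  exact (hasDerivAt_cexp_I_mul_ofReal_s10 phase_deriv).deriv

theorem deriv_deriv_planeWave2D_y :
    deriv (fun y' : ℝ => deriv (fun y'' : ℝ => planeWave2D ξ η ω x y'' t) y') y =
      -(η : ℂ) ^ 2 * planeWave2D ξ η ω x y t := by
  simp only [deriv_planeWave2D_y, deriv_const_mul_field]
  linear_combination (η : ℂ) ^ 2 * planeWave2D ξ η ω x y t * I_sq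

theorem eastABC_planeWave2D (ξ₀ V : ℝ) :
    eastABC ξ₀ V (planeWave2D ξ η ω) x y t =
      (eastABCSymbol ξ₀ ξ (ω - η ^ 2 - V) : ℝ) * planeWave2D ξ η ω x y t := by
  simp only [eastABC, eastABCSymbol, deriv_deriv_planeWave2D_y, deriv_planeWave2D_t,
    deriv_const_mul_field, deriv_planeWave2D_x]
  push_cast
  linear_combination ((3 * ξ₀ ^ 2 - V - η ^ 2 + ω) * ξ - 3 * ξ₀ * ω : ℂ) *
    planeWave2D ξ η ω x y t * I_sq

theorem eastABC_planeWave2D_eq_zero_iff (ξ₀ V : ℝ) :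
    eastABC ξ₀ V (planeWave2D ξ η ω) x y t = 0 ↔ eastABCSymbol ξ₀ ξ (ω - η ^ 2 - V) = 0 := by
  rw [eastABC_planeWave2D, mul_eq_zero_iff_right (planeWave2D_ne_zero ξ η ω x y t),
    ofReal_eq_zero]

end PlaneWave

/-- for the 2D plane wave with `ω = ξ² + η² + V`, the left-hand side of the
east absorbing boundary condition ABC(1,1) equals `−(ξ − ξ₀)³·ψ`; in particular it
annihilates exactly the plane waves with `ξ = ξ₀`, for every transverse wave number `η`. -/
theorem east_abc_plane_wave (ξ η ξ₀ V : ℝ) (ω : ℝ) (hω : ω = ξ ^ 2 + η ^ 2 + V) :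
    (∀ x y t : ℝ,
      Complex.I *
          deriv (fun x' : ℝ =>
            deriv (fun y' : ℝ => deriv (fun y'' : ℝ => planeWave2D ξ η ω x' y'' t) y') y) x
        - deriv (fun x' : ℝ => deriv (fun t' : ℝ => planeWave2D ξ η ω x' y t') t) x
        + Complex.I * ((3 * ξ₀ ^ 2 - V : ℝ) : ℂ) *
            deriv (fun x' : ℝ => planeWave2D ξ η ω x' y t) x
        + ((ξ₀ ^ 3 - 3 * ξ₀ * V : ℝ) : ℂ) * planeWave2D ξ η ω x y t
        + 3 * (ξ₀ : ℂ) *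
            deriv (fun y' : ℝ => deriv (fun y'' : ℝ => planeWave2D ξ η ω x y'' t) y') y
        + 3 * Complex.I * (ξ₀ : ℂ) * deriv (fun t' : ℝ => planeWave2D ξ η ω x y t') t
      = -(((ξ - ξ₀ : ℝ) : ℂ)) ^ 3 * planeWave2D ξ η ω x y t) ∧
    ((∀ x y t : ℝ,
      Complex.I *
          deriv (fun x' : ℝ =>
            deriv (fun y' : ℝ => deriv (fun y'' : ℝ => planeWave2D ξ η ω x' y'' t) y') y) x
        - deriv (fun x' : ℝ => deriv (fun t' : ℝ => planeWave2D ξ η ω x' y t') t) x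
        + Complex.I * ((3 * ξ₀ ^ 2 - V : ℝ) : ℂ) *
            deriv (fun x' : ℝ => planeWave2D ξ η ω x' y t) x
        + ((ξ₀ ^ 3 - 3 * ξ₀ * V : ℝ) : ℂ) * planeWave2D ξ η ω x y t
        + 3 * (ξ₀ : ℂ) *
            deriv (fun y' : ℝ => deriv (fun y'' : ℝ => planeWave2D ξ η ω x y'' t) y') y
        + 3 * Complex.I * (ξ₀ : ℂ) * deriv (fun t' : ℝ => planeWave2D ξ η ω x y t') t
      = 0) ↔ ξ = ξ₀) := by
  change (∀ x y t : ℝ, eastABC ξ₀ V (planeWave2D ξ η ω) x y t =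
      -(((ξ - ξ₀ : ℝ) : ℂ)) ^ 3 * planeWave2D ξ η ω x y t) ∧
    ((∀ x y t : ℝ, eastABC ξ₀ V (planeWave2D ξ η ω) x y t = 0) ↔ ξ = ξ₀)
  have dispersion : ω - η ^ 2 - V = ξ ^ 2 := by linarith
  constructor
  · intro x y t
    rw [eastABC_planeWave2D, dispersion, eastABCSymbol_sq, ofReal_neg, ofReal_pow]
  · simp only [eastABC_planeWave2D_eq_zero_iff, dispersion, eastABCSymbol_sq_eq_zero_iff,
      forall_const]
end
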